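/- Let K_i ⊆ ℝ^{d_i} (i = 1, …, n) be convex bodies such that at least n − 1 of them are tightly covered (i.e., there is an index i₀ such that K_i is tightly covered for every i ≠ i₀). Then for every 0 < λ < 1, N_λ(K_1 × ⋯ × K_n) = ∏_{i=1}^n N_λ(K_i). -/

import Mathlib

open Set Pointwise

section Defs

variable {V : Type*} [NormedAddCommGroup V] [NormedSpace ℝ V]

/-- A convex body: compact, convex, with nonempty interior. -/
def IsConvexBody (K : Set V) : Prop :=
  IsCompact K ∧ Convex ℝ K ∧ (interior K).Nonempty

/-- `K` can be covered by `m` homothets of ratio `lam`. -/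
def CoversWith (K : Set V) (lam : ℝ) (m : ℕ) : Prop :=
  ∃ t : Fin m → V, K ⊆ ⋃ i, (fun x => lam • x + t i) '' K

/-- The `m`-covering number `γ_m(K)`. -/
noncomputable def gammaC (m : ℕ) (K : Set V) : ℝ :=
  sInf {lam : ℝ | 0 < lam ∧ CoversWith K lam m}

/-- The covering index `coin(K)`. -/
noncomputable def coin (K : Set V) : ℝ :=
  sInf {r : ℝ | ∃ m : ℕ, 0 < m ∧ gammaC m K ≤ 1 / 2 ∧ r = (m : ℝ) / (1 - gammaC m K)}

/-- The weak covering index `wcoin(K)`. -/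
noncomputable def wcoin (K : Set V) : ℝ :=
  sInf {r : ℝ | ∃ m : ℕ, 0 < m ∧ gammaC m K < 1 ∧ r = (m : ℝ) / (1 - gammaC m K)}

/-- `N_λ(K)`: the least number of translates of `λ • K` needed to cover `K`. -/
noncomputable def covN (lam : ℝ) (K : Set V) : ℕ :=
  sInf {n : ℕ | CoversWith K lam n}

/-- A convex body is tightly covered if for every `0 < λ < 1` it contains `N_λ(K)`
points no two of which lie in a common homothet `λ • K + t`. -/
def TightlyCovered (K : Set V) : Prop :=
  ∀ lam : ℝ, 0 < lam → lam < 1 →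
    ∃ p : Fin (covN lam K) → V, (∀ i, p i ∈ K) ∧
      ∀ i j, i ≠ j → ∀ t : V,
        ¬(p i ∈ (fun x => lam • x + t) '' K ∧ p j ∈ (fun x => lam • x + t) '' K)

/-- The covering parameter `C(K)` of Swanepoel. -/
noncomputable def covParam (K : Set V) : ℝ :=
  sInf {r : ℝ | ∃ k : ℕ, ∃ lam : Fin k → ℝ, ∃ t : Fin k → V,
    (∀ i, 0 < lam i ∧ lam i < 1) ∧
    (K ⊆ ⋃ i, (fun x => lam i • x + t i) '' K) ∧
    r = ∑ i, 1 / (1 - lam i)}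

/-- The (multiplicative) Banach–Mazur distance. -/
noncomputable def distBM {d : ℕ} (K L : Set (Fin d → ℝ)) : ℝ :=
  sInf {δ : ℝ | 1 ≤ δ ∧ ∃ T : (Fin d → ℝ) ≃ₗ[ℝ] (Fin d → ℝ), ∃ a ∈ K, ∃ b ∈ L,
    (fun x => x - b) '' L ⊆ T '' ((fun x => x - a) '' K) ∧
    T '' ((fun x => x - a) '' K) ⊆ δ • ((fun x => x - b) '' L)}

end Defs

/-!
Products of translates show `covN lam (univ.pi K) ≤ ∏ i, covN lam (K i)`. For the reverse
inequality, let `p` be a family of points of `L`, indexed by `σ`, no two of which lie in a common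
translate of `lam • L`, and cover `K ×ˢ L` by homothets of ratio `lam`. Those meeting the slice
`K ×ˢ {p s}` project to a cover of `K`, so there are at least `covN lam K` of them, and no homothet
meets two such slices. Hence at least `card σ * covN lam K` homothets are used. Take `K` to be the
exceptional factor and `L` the product of the others, with the product of their families of points.
-/

section Covers

variable {V W : Type*} [NormedAddCommGroup V] [NormedSpace ℝ V]
  [NormedAddCommGroup W] [NormedSpace ℝ W] {K : Set V} {lam : ℝ} {m : ℕ}

theorem CoversWith.of_fintype {ι : Type*} [Fintype ι] (t : ι → V)
    (h : K ⊆ ⋃ i, (fun x => lam • x + t i) '' K) : CoversWith K lam (Fintype.card ι) := by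
  refine ⟨t ∘ (Fintype.equivFin ι).symm, h.trans_eq ?_⟩
  exact ((Fintype.equivFin ι).symm.iSup_comp (g := fun i => (fun x => lam • x + t i) '' K)).symm

theorem CoversWith.covN_le (h : CoversWith K lam m) : covN lam K ≤ m :=
  Nat.sInf_le h

theorem CoversWith.coversWith_covN (h : CoversWith K lam m) : CoversWith K lam (covN lam K) :=
  Nat.sInf_mem (s := {n | CoversWith K lam n}) ⟨m, h⟩

theorem CoversWith.image (f : V →ₗ[ℝ] W) (h : CoversWith K lam m) :
    CoversWith (f '' K) lam m := by
  obtain ⟨t, ht⟩ := h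
  refine ⟨f ∘ t, ?_⟩
  rintro _ ⟨x, hx, rfl⟩
  obtain ⟨k, y, hy, rfl⟩ := mem_iUnion.1 (ht hx)
  exact mem_iUnion.2 ⟨k, f y, mem_image_of_mem f hy, by simp⟩

theorem exists_coversWith_of_isCompact (hK : IsCompact K) (hint : (interior K).Nonempty)
    (hlam : lam ≠ 0) : ∃ m, CoversWith K lam m := by
  have hint_smul : (interior (lam • K)).Nonempty := by
    rw [interior_smul₀ hlam]
    exact hint.smul_set
  obtain ⟨s, hs⟩ := compact_covered_by_add_left_translates hK hint_smul
  refine ⟨_, .of_fintype (fun g : s => -(g : V)) fun x hx => ?_⟩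
  obtain ⟨g, hg, y, hy, hyx⟩ := mem_iUnion₂.1 (hs hx)
  have hy_eq : lam • y = g + x := hyx
  exact mem_iUnion.2 ⟨⟨g, hg⟩, y, hy, by simp [hy_eq]⟩

end Covers

theorem image_piSplitAt_univ_pi {ι : Type*} [DecidableEq ι] {α : ι → Type*} (K : ∀ i, Set (α i))
    (i : ι) :
    Equiv.piSplitAt i α '' univ.pi K = K i ×ˢ univ.pi fun j : {j // j ≠ i} => K j := by
  rw [← Equiv.eq_preimage_iff_image_eq]
  ext x
  simp only [mem_pi, mem_univ, true_imp_iff, mem_preimage, mem_prod, Equiv.piSplitAt_apply,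
    Subtype.forall]
  exact ⟨fun h => ⟨h i, fun j _ => h j⟩,
    fun h j => (eq_or_ne j i).elim (fun hj => hj ▸ h.1) (h.2 j)⟩

section Pi

variable {ι : Type*} [Fintype ι] {V : ι → Type*} [∀ i, NormedAddCommGroup (V i)]
  [∀ i, NormedSpace ℝ (V i)] {K : ∀ i, Set (V i)} {lam : ℝ}

theorem CoversWith.pi {m : ι → ℕ} (h : ∀ i, CoversWith (K i) lam (m i)) :
    CoversWith (univ.pi K) lam (∏ i, m i) := by
  classical
  choose t ht using h
  suffices hcover : univ.pi K ⊆
      ⋃ k : ∀ i, Fin (m i), (fun x => lam • x + fun i => t i (k i)) '' univ.pi K by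
    simpa using CoversWith.of_fintype _ hcover
  intro x hx
  choose k y hy hyx using fun i => mem_iUnion.1 (ht i (hx i (mem_univ i)))
  exact mem_iUnion.2 ⟨k, y, fun i _ => hy i, funext hyx⟩

theorem CoversWith.prod_of_pi [DecidableEq ι] {m : ℕ} (h : CoversWith (univ.pi K) lam m)
    (i : ι) : CoversWith (K i ×ˢ univ.pi fun j : {j // j ≠ i} => K j) lam m := by
  let split : (∀ j, V j) →ₗ[ℝ] V i × ∀ j : {j // j ≠ i}, V j :=
    IsLinearMap.mk' (Equiv.piSplitAt i V) ⟨fun _ _ => rfl, fun _ _ => rfl⟩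
  have h_split : CoversWith (Equiv.piSplitAt i V '' univ.pi K) lam m := h.image split
  rwa [image_piSplitAt_univ_pi] at h_split

end Pi

/-- `p` is a family of points of `K` no two of which lie in a common translate of `lam • K`.
`TightlyCovered K` asks for such a family of `covN lam K` points at every `0 < lam < 1`. -/
def HomothetSeparated {V σ : Type*} [NormedAddCommGroup V] [NormedSpace ℝ V] (lam : ℝ)
    (K : Set V) (p : σ → V) : Prop :=
  (∀ i, p i ∈ K) ∧ ∀ i j, i ≠ j → ∀ t : V,
    ¬(p i ∈ (fun x => lam • x + t) '' K ∧ p j ∈ (fun x => lam • x + t) '' K)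

namespace HomothetSeparated

theorem pi {ι : Type*} [Fintype ι] {V σ : ι → Type*} [∀ i, NormedAddCommGroup (V i)]
    [∀ i, NormedSpace ℝ (V i)] {K : ∀ i, Set (V i)} {lam : ℝ} {p : ∀ i, σ i → V i}
    (hp : ∀ i, HomothetSeparated lam (K i) (p i)) :
    HomothetSeparated lam (univ.pi K) fun (s : ∀ i, σ i) i => p i (s i) := by
  refine ⟨fun s i _ => (hp i).1 (s i), ?_⟩
  rintro s s' hne t ⟨⟨y, hy, hys⟩, y', hy', hys'⟩
  obtain ⟨i, hi⟩ := Function.ne_iff.1 hne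
  exact (hp i).2 _ _ hi (t i) ⟨⟨y i, hy i (mem_univ i), congrFun hys i⟩,
    y' i, hy' i (mem_univ i), congrFun hys' i⟩

variable {V W σ : Type*} [NormedAddCommGroup V] [NormedSpace ℝ V] [NormedAddCommGroup W]
  [NormedSpace ℝ W] [Fintype σ] {K : Set V} {L : Set W} {lam : ℝ} {p : σ → W} {m : ℕ}

theorem card_mul_covN_le (hp : HomothetSeparated lam L p) (h : CoversWith (K ×ˢ L) lam m) :
    Fintype.card σ * covN lam K ≤ m := by
  classical
  obtain ⟨t, ht⟩ := h
  let Meets (s : σ) (k : Fin m) : Prop := p s ∈ (fun y => lam • y + (t k).2) '' L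
  have covN_le_card_meets (s : σ) : covN lam K ≤ (Finset.univ.bipartiteAbove Meets s).card := by
    rw [← Fintype.card_coe]
    refine (CoversWith.of_fintype (fun k : Finset.univ.bipartiteAbove Meets s => (t k).1)
      fun x hx => ?_).covN_le
    obtain ⟨k, y, hy, hyx⟩ := mem_iUnion.1 (ht (mk_mem_prod hx (hp.1 s)))
    have hk : Meets s k := ⟨y.2, hy.2, congrArg Prod.snd hyx⟩
    exact mem_iUnion.2 ⟨⟨k, by simpa using hk⟩, y.1, hy.1, congrArg Prod.fst hyx⟩
  have card_meets_le_one (k : Fin m) : (Finset.univ.bipartiteBelow Meets k).card ≤ 1 := by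
    refine Finset.card_le_one.2 fun s hs s' hs' => by_contra fun hne => ?_
    exact hp.2 s s' hne (t k).2
      ⟨((Finset.mem_bipartiteBelow Meets).1 hs).2, ((Finset.mem_bipartiteBelow Meets).1 hs').2⟩
  simpa using Finset.card_mul_le_card_mul Meets (fun s _ => covN_le_card_meets s)
    fun k _ => card_meets_le_one k

end HomothetSeparated

theorem covN_directSum_general {ι : Type*} [Fintype ι] {V : ι → Type*}
    [∀ i, NormedAddCommGroup (V i)] [∀ i, NormedSpace ℝ (V i)] {K : ∀ i, Set (V i)} {lam : ℝ}
    (hcov : ∀ i, ∃ m, CoversWith (K i) lam m) (i₀ : ι)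
    (htight : ∀ i, i ≠ i₀ → ∃ p : Fin (covN lam (K i)) → V i, HomothetSeparated lam (K i) p) :
    covN lam (univ.pi K) = ∏ i, covN lam (K i) := by
  classical
  have hcover : CoversWith (univ.pi K) lam (∏ i, covN lam (K i)) :=
    .pi fun i => (hcov i).elim fun _ h => h.coversWith_covN
  choose p hp using fun i : {i // i ≠ i₀} => htight i i.2
  refine hcover.covN_le.antisymm ?_
  calc ∏ i, covN lam (K i)
      = (∏ i : {i // i ≠ i₀}, covN lam (K i)) * covN lam (K i₀) := by
        rw [Fintype.prod_eq_mul_prod_subtype_ne _ i₀, mul_comm]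
    _ = Fintype.card (∀ i : {i // i ≠ i₀}, Fin (covN lam (K i))) * covN lam (K i₀) := by simp
    _ ≤ covN lam (univ.pi K) :=
        (HomothetSeparated.pi hp).card_mul_covN_le (hcover.coversWith_covN.prod_of_pi i₀)

/-- covering numbers of direct vector sums multiply when `n - 1`
of the bodies are tightly covered. -/
theorem covN_directSum (n : ℕ) (d : Fin n → ℕ)
    (K : ∀ i, Set (Fin (d i) → ℝ)) (hK : ∀ i, IsConvexBody (K i))
    (i₀ : Fin n) (htight : ∀ i, i ≠ i₀ → TightlyCovered (K i))
    (lam : ℝ) (h0 : 0 < lam) (h1 : lam < 1) :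
    covN lam (Set.univ.pi K) = ∏ i, covN lam (K i) :=
  covN_directSum_general (fun i => exists_coversWith_of_isCompact (hK i).1 (hK i).2.2 h0.ne') i₀
    fun i hi => htight i hi lam h0 h1
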